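/- Let p = 2, let (G,N) be a pair of finite 2-groups, let σ : N* → G be a relative central extension of (G,N), and let K be a G-invariant subgroup of N*. Then [K,G] ≤ 𝕌₂(K) if and only if [K,G] ≤ 𝕌₂(K)·𝕌₁([K,G]). (Lemma 3.7(iii) of the paper: the right-hand condition is the unfolded form of the condition [K/𝕌₁([K,G]), G] ≤ 𝕌₂(K/𝕌₁([K,G])) in the quotient.) -/

import Mathlib

/-!
The forward direction is trivial. For the converse, write `L = [K, G]`, `U = 𝕌₂(K)`. If `L` is a
finite `2`-group, then `𝕌₁(L)` lies in its Frattini subgroup, because every maximal subgroup of `L`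
contains all squares. Since `𝕌₁(L) ≤ L`, the hypothesis gives `L = (L ∩ U) 𝕌₁(L)`, so `L ≤ U`.

As `ker σ` may be infinite, finiteness of `L` needs an argument. Put `M = N*`. The kernel of `σ` is
central with index a power of `2`, and `[m, g]` depends only on `σ m` and `g`, so there are finitely
many `G`-commutators. Ordinary commutators of `M` are among them, so by Schur's theorem the derived
subgroup `M'` is a finite `2`-group. Modulo `M'` the map `m ↦ [m, g]` is multiplicative, so
`[m, g] ^ |G| ≡ [m ^ |G|, g] = 1` since `m ^ |G| ∈ ker σ`. Thus the image of `[M, G]` in the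
abelianization is generated by finitely many elements of `2`-power order, and `[M, G]` is a finite
`2`-group.
-/

/-- The iterated commutator subgroup `[N, _k G]`. -/
def iterCommG {G : Type*} [Group G] (N : Subgroup G) : ℕ → Subgroup G
  | 0 => N
  | k + 1 => ⁅iterCommG N k, (⊤ : Subgroup G)⁆

/-- `𝕌_i(H)`: the subgroup generated by all `p^i`-th powers of elements of `H`. -/
def pPow {G : Type*} [Group G] (p i : ℕ) (H : Subgroup G) : Subgroup G :=
  Subgroup.closure {x | ∃ h ∈ H, x = h ^ p ^ i}

/-- A relative central extension of the pair `(G, N)`. -/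
structure RelCentralExt {M G : Type*} [Group M] [Group G] (σ : M →* G) (N : Subgroup G) where
  /-- the action of `G` on `M`, written `m ↦ m^g` in the paper -/
  act : M → G → M
  act_mul : ∀ m n g, act (m * n) g = act m g * act n g
  act_one : ∀ m, act m 1 = m
  act_act : ∀ m g h, act (act m g) h = act m (g * h)
  range_eq : σ.range = N
  sigma_act : ∀ m g, σ (act m g) = g⁻¹ * σ m * g
  act_sigma : ∀ m m₁, act m (σ m₁) = m₁⁻¹ * m * m₁
  ker_act : ∀ a ∈ σ.ker, ∀ g : G, act a g = a

namespace RelCentralExt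

variable {M G : Type*} [Group M] [Group G] {σ : M →* G} {N : Subgroup G}

/-- The `G`-commutator `[m, g] = m⁻¹ · m^g`. -/
def cmt (E : RelCentralExt σ N) (m : M) (g : G) : M := m⁻¹ * E.act m g

/-- The subgroup `[M', G]` generated by all `G`-commutators `[m, g]`, `m ∈ M'`, `g ∈ G`. -/
def commSub (E : RelCentralExt σ N) (M' : Subgroup M) : Subgroup M :=
  Subgroup.closure {x | ∃ m ∈ M', ∃ g : G, x = E.cmt m g}

/-- The iterated subgroup `[M', _n G]`. -/
def iterComm (E : RelCentralExt σ N) (M' : Subgroup M) : ℕ → Subgroup M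
  | 0 => M'
  | n + 1 => E.commSub (E.iterComm M' n)

end RelCentralExt

open Pointwise

/-- In a finite `2`-group every maximal subgroup contains all squares. -/
lemma sq_mem_of_isCoatom {P : Type*} [Group P] [Finite P] (hP : IsPGroup 2 P)
    {C : Subgroup P} (hC : IsCoatom C) (x : P) : x ^ 2 ∈ C := by
  have : Fact (Nat.Prime 2) := ⟨Nat.prime_two⟩
  have := hP.isNilpotent
  have hnorm : C.Normal :=
    Subgroup.NormalizerCondition.normal_of_coatom C Group.normalizerCondition_of_isNilpotent hC
  by_contra hx
  have htop : C ⊔ Subgroup.zpowers (x ^ 2) = ⊤ := by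
    refine hC.2 _ (lt_of_le_of_ne le_sup_left fun h => hx ?_)
    rw [h]
    exact Subgroup.mem_sup_right (Subgroup.mem_zpowers _)
  have hxm : x ∈ C ⊔ Subgroup.zpowers (x ^ 2) := htop ▸ Subgroup.mem_top x
  rw [Subgroup.mem_sup_of_normal_left] at hxm
  obtain ⟨c, hc, z, hz, hcz⟩ := hxm
  obtain ⟨j, rfl⟩ := Subgroup.mem_zpowers_iff.1 hz
  have hodd : x ^ (1 - 2 * j) ∈ C := by
    have : x ^ (1 - 2 * j) = c := by
      rw [zpow_sub, zpow_one, mul_inv_eq_iff_eq_mul, ← hcz, zpow_mul]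
      simp [hcz]
    rwa [this]
  -- An odd power of an element of `2`-power order generates the same cyclic subgroup.
  obtain ⟨k, hk⟩ := hP x
  have hcop : IsCoprime (1 - 2 * j) ((2 : ℤ) ^ k) :=
    IsCoprime.pow_right ⟨1, j, by ring⟩
  obtain ⟨a, b, hab⟩ := hcop
  apply hx
  have hxC : x ∈ C := by
    have h1 : x = (x ^ (1 - 2 * j)) ^ a := by
      have hk' : x ^ ((2 : ℤ) ^ k) = 1 := by exact_mod_cast hk
      calc x = x ^ (a * (1 - 2 * j) + b * 2 ^ k) := by rw [hab, zpow_one]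
        _ = (x ^ (1 - 2 * j)) ^ a := by
          rw [zpow_add, mul_comm b, zpow_mul x (2 ^ k), hk', one_zpow, mul_one, mul_comm a, zpow_mul]
    rw [h1]
    exact C.zpow_mem hodd a
  exact C.pow_mem hxC 2

/-- Frattini argument: a finite `2`-group contained in `U · 𝕌₁(L)` is contained in `U`. -/
lemma le_of_subset_mul_pPow {M : Type*} [Group M] (L U : Subgroup M) [Finite L]
    (hL : IsPGroup 2 L) (h : (L : Set M) ⊆ (U : Set M) * (pPow 2 1 L : Set M)) : L ≤ U := by
  rw [← Subgroup.subgroupOf_eq_top]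
  rcases eq_top_or_exists_le_coatom (U.subgroupOf L) with h' | ⟨C, hC, hUC⟩
  · exact h'
  refine absurd ?_ hC.1
  have hle : pPow 2 1 L ≤ C.map L.subtype := by
    refine (Subgroup.closure_le _).2 ?_
    rintro _ ⟨y, hy, rfl⟩
    exact ⟨⟨y, hy⟩ ^ 2, sq_mem_of_isCoatom hL hC _, by simp⟩
  rw [eq_top_iff]
  rintro ⟨x, hx⟩ -
  obtain ⟨u, hu, v, hv, huv⟩ := h hx
  obtain ⟨⟨w, hw⟩, hwC, rfl⟩ := hle hv
  have huv : u * w = x := huv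
  have huL : u ∈ L := by
    rw [← mul_inv_eq_iff_eq_mul.2 huv.symm]
    exact L.mul_mem hx (L.inv_mem hw)
  have : (⟨x, hx⟩ : L) = ⟨u, huL⟩ * ⟨w, hw⟩ := Subtype.ext huv.symm
  rw [this]
  exact C.mul_mem (hUC hu) hwC

namespace RelCentralExt

variable {M G : Type*} [Group M] [Group G] {σ : M →* G} {N : Subgroup G}

/-- The action of a fixed `g` as an endomorphism of `M`. -/
def actHom (E : RelCentralExt σ N) (g : G) : M →* M :=
  MonoidHom.mk' (fun m => E.act m g) fun m n => E.act_mul m n g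

lemma ker_le_center (E : RelCentralExt σ N) : σ.ker ≤ Subgroup.center M := by
  intro a ha
  rw [Subgroup.mem_center_iff]
  intro m
  have h := E.act_sigma a m
  rw [E.ker_act a ha, mul_assoc, eq_inv_mul_iff_mul_eq] at h
  exact h

lemma cmt_eq_of_sigma_eq (E : RelCentralExt σ N) {m m' : M} (h : σ m = σ m') (g : G) :
    E.cmt m g = E.cmt m' g := by
  have ha : m' * m⁻¹ ∈ σ.ker := by simp [MonoidHom.mem_ker, h]
  have hm : m' = (m' * m⁻¹) * m := by group
  rw [hm, cmt, cmt, E.act_mul, E.ker_act _ ha]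
  group

lemma finite_range_cmt [Finite G] (E : RelCentralExt σ N) :
    (Set.range fun q : M × G => E.cmt q.1 q.2).Finite := by
  refine (Set.finite_range fun q : σ.range × G => E.cmt q.1.2.choose q.2).subset ?_
  rintro _ ⟨⟨m, g⟩, rfl⟩
  refine ⟨⟨⟨σ m, m, rfl⟩, g⟩, E.cmt_eq_of_sigma_eq ?_ g⟩
  exact (⟨m, rfl⟩ : σ m ∈ σ.range).choose_spec

lemma finite_commutatorSet [Finite G] (E : RelCentralExt σ N) : Finite (commutatorSet M) := by
  refine (E.finite_range_cmt.subset ?_).to_subtype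
  rintro _ ⟨a, b, rfl⟩
  refine ⟨⟨a⁻¹, σ b⁻¹⟩, ?_⟩
  simp only [cmt, E.act_sigma, commutatorElement_def]
  group

/-- Schur's theorem applied to `M`, whose center contains `ker σ` and so has index dividing
`|G|`. -/
lemma card_commutator [Finite G] (hG : IsPGroup 2 G) (E : RelCentralExt σ N) :
    ∃ k, Nat.card (commutator M) = 2 ^ k := by
  have : Fact (Nat.Prime 2) := ⟨Nat.prime_two⟩
  have := E.finite_commutatorSet
  obtain ⟨n, hn⟩ := IsPGroup.iff_card.1 hG
  have hidx : (Subgroup.center M).index ∣ 2 ^ n := by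
    rw [← hn]
    refine (Subgroup.index_dvd_of_le E.ker_le_center).trans ?_
    rw [Subgroup.index_ker]
    exact Subgroup.card_subgroup_dvd_card _
  have h := (Subgroup.card_commutator_dvd_index_center_pow M).trans (pow_dvd_pow_of_dvd hidx _)
  rw [← pow_mul] at h
  obtain ⟨k, -, hk⟩ := (Nat.dvd_prime_pow Nat.prime_two).1 h
  exact ⟨k, hk⟩

/-- Modulo the derived subgroup, `[m, g] ^ |G| = [m ^ |G|, g] = 1`. -/
lemma of_cmt_pow_card [Finite G] (E : RelCentralExt σ N) (m : M) (g : G) :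
    Abelianization.of (E.cmt m g) ^ Nat.card G = 1 := by
  have hker : m ^ Nat.card G ∈ σ.ker := by
    rw [MonoidHom.mem_ker, map_pow, pow_card_eq_one']
  have hact : E.act m g ^ Nat.card G = m ^ Nat.card G :=
    (map_pow (E.actHom g) m _).symm.trans (E.ker_act _ hker g)
  rw [cmt, map_mul, mul_pow, ← map_pow, ← map_pow, inv_pow, hact, map_inv, inv_mul_cancel]

/-- Every element of `[K, G]` has `|G|`-th power in the derived subgroup of `M`. -/
lemma of_pow_card_eq_one [Finite G] (E : RelCentralExt σ N) (K : Subgroup M) {x : M}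
    (hx : x ∈ E.commSub K) : Abelianization.of x ^ Nat.card G = 1 := by
  have : E.commSub K ≤ ((powMonoidHom (Nat.card G)).comp Abelianization.of).ker := by
    refine (Subgroup.closure_le _).2 ?_
    rintro _ ⟨m, -, g, rfl⟩
    exact E.of_cmt_pow_card m g
  exact this hx

lemma isPGroup_commSub [Finite G] (hG : IsPGroup 2 G) (E : RelCentralExt σ N)
    (K : Subgroup M) : IsPGroup 2 (E.commSub K) := by
  have : Fact (Nat.Prime 2) := ⟨Nat.prime_two⟩
  obtain ⟨n, hn⟩ := IsPGroup.iff_card.1 hG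
  obtain ⟨k, hk⟩ := E.card_commutator hG
  rintro ⟨x, hx⟩
  have h := E.of_pow_card_eq_one K hx
  rw [← map_pow, ← MonoidHom.mem_ker, Abelianization.ker_of, hn] at h
  refine ⟨n + k, Subtype.ext ?_⟩
  have h2 := pow_card_eq_one' (x := (⟨_, h⟩ : commutator M))
  rw [hk] at h2
  simpa [pow_add, pow_mul] using congrArg Subtype.val h2

lemma finite_commSub [Finite G] (E : RelCentralExt σ N) (K : Subgroup M) :
    Finite (E.commSub K) := by
  have := E.finite_commutatorSet
  -- The image of `[K, G]` in the abelianization is finitely generated and torsion.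
  let A := (E.commSub K).map Abelianization.of
  have hfg : A.FG := by
    refine (Subgroup.fg_iff _).2
      ⟨_, (MonoidHom.map_closure _ _).symm, (E.finite_range_cmt.subset ?_).image _⟩
    rintro _ ⟨m, -, g, rfl⟩
    exact ⟨⟨m, g⟩, rfl⟩
  have : Group.FG A := (Group.fg_iff_subgroup_fg A).2 hfg
  have hA : Finite A := by
    refine CommGroup.finite_of_fg_isMulTorsion A ?_
    rintro ⟨_, x, hx, rfl⟩
    exact isOfFinOrder_iff_pow_eq_one.2
      ⟨Nat.card G, Nat.card_pos, Subtype.ext (E.of_pow_card_eq_one K hx)⟩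
  -- The fibres of the abelianization map are cosets of the finite derived subgroup.
  have hker : Finite (Abelianization.of (G := M)).ker := by
    rw [Abelianization.ker_of]; infer_instance
  refine (Set.Finite.subset (Set.Finite.preimage' (f := Abelianization.of (G := M))
    (Set.toFinite (A : Set (Abelianization M))) fun b _ => ?_) fun x hx => ⟨x, hx, rfl⟩).to_subtype
  rcases (Abelianization.of (G := M) ⁻¹' {b}).eq_empty_or_nonempty with h | ⟨y, hy⟩
  · simp [h]
  refine ((Set.toFinite ((Abelianization.of (G := M)).ker : Set M)).image (y * ·)).subset ?_
  intro z hz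
  refine ⟨y⁻¹ * z, ?_, by simp⟩
  rw [Set.mem_preimage, Set.mem_singleton_iff] at hy hz
  rw [SetLike.mem_coe, MonoidHom.mem_ker, map_mul, map_inv, hy, hz, inv_mul_cancel]

end RelCentralExt

/-- Lemma 3.7(iii): let `(G, N)` be a pair of finite `2`-groups, `σ : N* → G` a relative
central extension of `(G, N)`, and `K` a `G`-invariant subgroup of `N*`. Then
`[K, G] ≤ 𝕌₂(K)` iff `[K, G] ⊆ 𝕌₂(K) · 𝕌₁([K, G])` (the latter being the unfolded form
of `[K/𝕌₁([K, G]), G] ≤ 𝕌₂(K/𝕌₁([K, G]))`). -/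
theorem stmt_11 {G : Type*} [Group G] [Finite G]
    (hG : IsPGroup 2 G) (N : Subgroup G) (hN : N.Normal)
    {Nstar : Type*} [Group Nstar] (σ : Nstar →* G) (E : RelCentralExt σ N)
    (K : Subgroup Nstar) (hKinv : ∀ m ∈ K, ∀ g : G, E.act m g ∈ K) :
    E.commSub K ≤ pPow 2 2 K ↔
      (E.commSub K : Set Nstar) ⊆
        (pPow 2 2 K : Set Nstar) * (pPow 2 1 (E.commSub K) : Set Nstar) := by
  have := E.finite_commSub K
  constructor
  · intro h x hx
    exact ⟨x, h hx, 1, one_mem _, mul_one x⟩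
  · exact le_of_subset_mul_pPow _ _ (E.isPGroup_commSub hG K)
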